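/- Let G be a finitely generated, infinite, virtually solvable group and let μ be a finitely supported, non-degenerate, symmetric, lazy probability measure on G. Then limsup_{i→∞} μ^{*i}({g ∈ G : g has finite order}) < 1. -/

import Mathlib

/-!
Some finite-index subgroup `K` of `G` has infinite abelianization: take the last term of finite index
in the derived series of a solvable subgroup of finite index. By Schreier's lemma `K` is finitely
generated, so its abelianization has an element of infinite order, the image of some `t ∈ K`. Let `A`
be the set of elements of `K` whose image in the abelianization has infinite order; such elements have
infinite order in `G`. If `r` ranges over representatives of the cosets `gK`, and `S` is the finite
set of all `r` and all `r * t`, then every `g : G` has some `s ∈ S` with `g * s ∈ A`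
(`exists_syndetic`).

As `μ` is lazy and non-degenerate, there are `m` and `c > 0` such that from any point the walk makes the
increment `s` in exactly `m` steps with probability at least `c`, for every `s ∈ S`
(`exists_uniform_step`). Hence the walk is in `A` at time `i + m` with probability at least `c / |S|`,
uniformly in `i`, which bounds the probability of being torsion away from `1`.
-/


open Filter Topology

/-- Convolution of two (discrete) measures on a group. -/
noncomputable def convMeas {G : Type*} [Group G] (μ ν : G → ℝ) : G → ℝ :=
  fun g => ∑' h : G, μ h * ν (h⁻¹ * g)

open Classical in
/-- `i`-fold convolution power of a measure: the distribution of the `i`-th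
step of the random walk with step distribution `μ`. -/
noncomputable def convPowMeas {G : Type*} [Group G] (μ : G → ℝ) : ℕ → G → ℝ
  | 0 => fun g => if g = 1 then 1 else 0
  | i + 1 => convMeas (convPowMeas μ i) μ

/-- The measure of a set under a discrete measure. -/
noncomputable def measSet {G : Type*} (μ : G → ℝ) (A : Set G) : ℝ :=
  ∑' a : A, μ (a : G)

/-! ### Group theory -/

lemma exists_finiteIndex_infinite_abelianization {G : Type*} [Group G] [Infinite G]
    (H : Subgroup G) [Group.IsSolvable H] (hH : H.FiniteIndex) :
    ∃ K : Subgroup G, K.FiniteIndex ∧ Infinite (Abelianization K) := by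
  obtain ⟨n, hn⟩ := Group.IsSolvable.solvable (G := H)
  have hbot : ¬ ((derivedSeries H n).map H.subtype).FiniteIndex := by
    rw [hn, Subgroup.map_bot]
    intro h
    exact h.index_ne_zero (by simp)
  have h0 : ((derivedSeries H 0).map H.subtype).FiniteIndex := by
    simpa [← MonoidHom.range_eq_map] using hH
  -- the last term of finite index in the derived series
  obtain ⟨k, hk, hk'⟩ : ∃ k, ((derivedSeries H k).map H.subtype).FiniteIndex ∧
      ¬ ((derivedSeries H (k + 1)).map H.subtype).FiniteIndex := by
    by_contra! hcon
    exact hbot (Nat.rec h0 hcon n)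
  refine ⟨_, hk, ?_⟩
  by_contra hfin
  rw [not_infinite_iff_finite] at hfin
  apply hk'
  rw [derivedSeries_succ, Subgroup.map_commutator]
  set K := (derivedSeries H k).map H.subtype
  have hmap : (commutator K).map K.subtype = ⁅K, K⁆ := by
    rw [commutator_def, Subgroup.map_commutator, ← MonoidHom.range_eq_map, Subgroup.range_subtype]
  have hci : (commutator K).FiniteIndex := by
    have : Finite (K ⧸ commutator K) := hfin
    exact Subgroup.finiteIndex_of_finite_quotient
  rw [← hmap]
  constructor
  rw [Subgroup.index_map_subtype]
  exact mul_ne_zero hci.index_ne_zero hk.index_ne_zero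

/-- There is a set `A` of elements of infinite order that every point of `G` reaches by right
multiplication by an element of a fixed finite set `S`. -/
lemma exists_syndetic {G : Type*} [Group G] [Group.FG G] [Infinite G]
    (hvsolv : ∃ H : Subgroup G, IsSolvable ↥H ∧ H.FiniteIndex) :
    ∃ (A : Set G) (S : Finset G), (∀ a ∈ A, ¬ IsOfFinOrder a) ∧
      ∀ g : G, ∃ s ∈ S, g * s ∈ A := by
  classical
  obtain ⟨H, hs, hH⟩ := hvsolv
  have : Group.IsSolvable H := hs
  obtain ⟨K, hK, hinf⟩ := exists_finiteIndex_infinite_abelianization H hH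
  have hKfg : Group.FG K := Subgroup.fg_of_index_ne_zero K
  have hab : Group.FG (Abelianization K) :=
    Group.fg_of_surjective (f := Abelianization.of) (QuotientGroup.mk'_surjective _)
  obtain ⟨x, hx⟩ : ∃ x : Abelianization K, ¬ IsOfFinOrder x := by
    by_contra! hcon
    have := CommGroup.finite_of_fg_isMulTorsion (G := Abelianization K) hcon
    exact not_finite (Abelianization K)
  obtain ⟨t, rfl⟩ : ∃ t : K, Abelianization.of t = x := QuotientGroup.mk'_surjective _ x
  have hfin : Finite (G ⧸ K) := Subgroup.finite_quotient_of_finiteIndex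
  have := Fintype.ofFinite (G ⧸ K)
  let R : Finset G := Finset.univ.image fun q : G ⧸ K => q.out
  refine ⟨{a | ∃ h : a ∈ K, ¬ IsOfFinOrder (Abelianization.of (⟨a, h⟩ : K))},
    R ∪ R.image (· * (t : G)), ?_, ?_⟩
  · rintro a ⟨h, ha⟩ hfo
    apply ha
    apply MonoidHom.isOfFinOrder
    exact Submonoid.isOfFinOrder_coe.1 hfo
  · intro g
    let q : G ⧸ K := QuotientGroup.mk g⁻¹
    have hr : g * q.out ∈ K := by
      have : (QuotientGroup.mk g⁻¹ : G ⧸ K) = QuotientGroup.mk q.out := (Quotient.out_eq' q).symm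
      simpa using QuotientGroup.eq.1 this
    have hqR : q.out ∈ R := Finset.mem_image_of_mem _ (Finset.mem_univ q)
    by_cases h : IsOfFinOrder (Abelianization.of (⟨g * q.out, hr⟩ : K))
    · refine ⟨q.out * t, Finset.mem_union_right _ (Finset.mem_image_of_mem _ hqR), ?_⟩
      have hmem : g * (q.out * t) ∈ K := by
        rw [← mul_assoc]
        exact K.mul_mem hr t.2
      refine ⟨hmem, fun h' => hx ?_⟩
      have heq : Abelianization.of t = (Abelianization.of (⟨g * q.out, hr⟩ : K))⁻¹ *
          Abelianization.of (⟨g * (q.out * t), hmem⟩ : K) := by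
        rw [← map_inv, ← map_mul]
        congr 1
        ext
        simp [mul_assoc]
      rw [heq]
      exact h.inv.mul h'
    · exact ⟨q.out, Finset.mem_union_left _ hqR, hr, h⟩

/-! ### Convolution powers -/

section walk

variable {G : Type*}

lemma measSet_add_le_one {p : G → ℝ} (hp : ∀ g, 0 ≤ p g) (h1 : HasSum p 1)
    {A B : Set G} (hAB : Disjoint A B) : measSet p A + measSet p B ≤ 1 := by
  have h := (h1.summable.subtype A).tsum_union_disjoint hAB (h1.summable.subtype B)
  unfold measSet
  rw [← h, ← h1.tsum_eq]
  exact h1.summable.tsum_subtype_le p _ hp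

variable [Group G]

lemma convMeas_hasSum_prod {p μ : G → ℝ} (hp : ∀ g, 0 ≤ p g) (hμ : ∀ g, 0 ≤ μ g)
    (hps : Summable p) (hμs : Summable μ) :
    HasSum (fun x : G × G => p x.2 * μ (x.2⁻¹ * x.1)) ((∑' g, p g) * ∑' g, μ g) := by
  have hs : HasSum (fun x : G × G => p x.1 * μ x.2) ((∑' g, p g) * ∑' g, μ g) :=
    hps.hasSum.mul hμs.hasSum (hps.mul_of_nonneg hμs hp hμ)
  let e : G × G ≃ G × G :=
    { toFun := fun x => (x.2, x.2⁻¹ * x.1)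
      invFun := fun x => (x.1 * x.2, x.1)
      left_inv := fun x => by simp
      right_inv := fun x => by simp }
  exact e.hasSum_iff.2 hs

lemma convMeas_nonneg {p μ : G → ℝ} (hp : ∀ g, 0 ≤ p g) (hμ : ∀ g, 0 ≤ μ g) (g : G) :
    0 ≤ convMeas p μ g :=
  tsum_nonneg fun _ => mul_nonneg (hp _) (hμ _)

lemma convMeas_hasSum {p μ : G → ℝ} (hp : ∀ g, 0 ≤ p g) (hμ : ∀ g, 0 ≤ μ g)
    (hps : Summable p) (hμs : Summable μ) :
    HasSum (convMeas p μ) ((∑' g, p g) * ∑' g, μ g) := by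
  have h := convMeas_hasSum_prod hp hμ hps hμs
  exact h.prod_fiberwise fun g => (h.summable.prod_factor g).hasSum

lemma mul_le_convMeas {p μ : G → ℝ} (hp : ∀ g, 0 ≤ p g) (hμ : ∀ g, 0 ≤ μ g)
    (hps : Summable p) (hμs : Summable μ) (g s : G) :
    p g * μ s ≤ convMeas p μ (g * s) := by
  have h := (convMeas_hasSum_prod hp hμ hps hμs).summable.prod_factor (g * s)
  simpa [convMeas] using h.le_tsum g fun _ _ => mul_nonneg (hp _) (hμ _)

lemma convPowMeas_nonneg {μ : G → ℝ} (hμ : ∀ g, 0 ≤ μ g) (i : ℕ) (g : G) :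
    0 ≤ convPowMeas μ i g := by
  induction i generalizing g with
  | zero => simp only [convPowMeas]; split_ifs <;> simp
  | succ i ih => exact convMeas_nonneg ih hμ g

lemma convPowMeas_hasSum {μ : G → ℝ} (hμ : ∀ g, 0 ≤ μ g) (h1 : HasSum μ 1) (i : ℕ) :
    HasSum (convPowMeas μ i) 1 := by
  induction i with
  | zero => classical simpa [convPowMeas] using hasSum_ite_eq (1 : G) (1 : ℝ)
  | succ i ih =>
    have h := convMeas_hasSum (convPowMeas_nonneg hμ i) hμ ih.summable h1.summable
    rwa [ih.tsum_eq, h1.tsum_eq, one_mul] at h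

/-- The walk makes the increment `s` in exactly `m` steps with probability at least `c`, phrased as
a bound on the law at time `i + m` that avoids associativity of convolution. -/
def StepBound (μ : G → ℝ) (s : G) (m : ℕ) (c : ℝ) : Prop :=
  ∀ i g, c * convPowMeas μ i g ≤ convPowMeas μ (i + m) (g * s)

lemma StepBound.single {μ : G → ℝ} (hμ : ∀ g, 0 ≤ μ g) (h1 : HasSum μ 1) (s : G) :
    StepBound μ s 1 (μ s) := fun i g => by
  rw [mul_comm]
  exact mul_le_convMeas (convPowMeas_nonneg hμ i) hμ (convPowMeas_hasSum hμ h1 i).summable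
    h1.summable g s

lemma StepBound.mul {μ : G → ℝ} {s t : G} {m n : ℕ} {c d : ℝ} (hd : 0 ≤ d)
    (hs : StepBound μ s m c) (ht : StepBound μ t n d) : StepBound μ (s * t) (m + n) (d * c) :=
  fun i g => by
    have h := (mul_le_mul_of_nonneg_left (hs i g) hd).trans (ht (i + m) (g * s))
    rwa [← mul_assoc, mul_assoc g, add_assoc] at h

lemma StepBound.lazy {μ : G → ℝ} (hμ : ∀ g, 0 ≤ μ g) (h1 : HasSum μ 1) (n : ℕ) :
    StepBound μ 1 n (μ 1 ^ n) := by
  induction n with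
  | zero => intro i g; simp
  | succ n ih =>
    simpa [pow_succ'] using ih.mul (hμ 1) (StepBound.single hμ h1 1)

lemma exists_stepBound {μ : G → ℝ} (hμ : ∀ g, 0 ≤ μ g) (h1 : HasSum μ 1)
    (hnondeg : Subsemigroup.closure {g | μ g ≠ 0} = ⊤) (s : G) :
    ∃ m c, 0 < c ∧ StepBound μ s m c := by
  have hs : s ∈ Subsemigroup.closure {g | μ g ≠ 0} := hnondeg ▸ Subsemigroup.mem_top s
  induction hs using Subsemigroup.closure_induction with
  | mem x hx => exact ⟨1, μ x, (hμ x).lt_of_ne' hx, StepBound.single hμ h1 x⟩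
  | mul x y _ _ hx hy =>
    obtain ⟨m, c, hc, h⟩ := hx
    obtain ⟨n, d, hd, h'⟩ := hy
    exact ⟨m + n, d * c, mul_pos hd hc, h.mul hd.le h'⟩

/-- Laziness lets all increments in a finite set be made in the same number of steps. -/
lemma exists_uniform_step {μ : G → ℝ} (hμ : ∀ g, 0 ≤ μ g) (h1 : HasSum μ 1)
    (hnondeg : Subsemigroup.closure {g | μ g ≠ 0} = ⊤) (hlazy : 0 < μ 1) (S : Finset G) :
    ∃ m c, 0 < c ∧ ∀ s ∈ S, StepBound μ s m c := by
  classical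
  induction S using Finset.induction_on with
  | empty => exact ⟨0, 1, one_pos, by simp⟩
  | insert a S _ ih =>
    obtain ⟨m, c, hc, h⟩ := ih
    obtain ⟨n, d, hd, h'⟩ := exists_stepBound hμ h1 hnondeg a
    have key : ∀ {s : G} {k l : ℕ} {b : ℝ}, StepBound μ s k b →
        StepBound μ s (k + l) (μ 1 ^ l * b) := fun hb => by
      simpa using hb.mul (pow_nonneg (hμ 1) _) (StepBound.lazy hμ h1 _)
    refine ⟨m + n, min (μ 1 ^ n * c) (μ 1 ^ m * d),
      lt_min (by positivity) (by positivity), fun s hs i g => ?_⟩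
    have hnn := convPowMeas_nonneg hμ i g
    rcases Finset.mem_insert.1 hs with rfl | hs
    · rw [add_comm m n]
      exact (mul_le_mul_of_nonneg_right (min_le_right _ _) hnn).trans (key h' i g)
    · exact (mul_le_mul_of_nonneg_right (min_le_left _ _) hnn).trans (key (h s hs) i g)

/-- If every point has some `s ∈ S` leading into `A`, summing the step bounds over all starting points
and all `s ∈ S` bounds the mass of `A` from below. -/
lemma le_measSet_of_syndetic {μ : G → ℝ} (hμ : ∀ g, 0 ≤ μ g) (h1 : HasSum μ 1)
    {A : Set G} {S : Finset G} (hAS : ∀ g : G, ∃ s ∈ S, g * s ∈ A) {m : ℕ} {c : ℝ}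
    (hS : ∀ s ∈ S, StepBound μ s m c) (i : ℕ) :
    c ≤ S.card * measSet (convPowMeas μ (i + m)) A := by
  have hp : ∀ g, 0 ≤ convPowMeas μ (i + m) g := convPowMeas_nonneg hμ _
  have hpS : Summable (convPowMeas μ (i + m)) := (convPowMeas_hasSum hμ h1 _).summable
  have hstep : ∀ s ∈ S, ∀ g, c * convPowMeas μ i g ≤ convPowMeas μ (i + m) (g * s) :=
    fun s hs => hS s hs i
  generalize convPowMeas μ (i + m) = p at hp hpS hstep ⊢
  have hA : HasSum (A.indicator p) (measSet p A) := by
    have := (hpS.indicator A).hasSum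
    rwa [← tsum_subtype] at this
  have hsum : HasSum (fun g => ∑ s ∈ S, A.indicator p (g * s)) (∑ _s ∈ S, measSet p A) := by
    refine hasSum_sum fun s _ => ?_
    have h := (Equiv.mulRight s).hasSum_iff (f := A.indicator p) (a := measSet p A)
    exact h.2 hA
  rw [Finset.sum_const, nsmul_eq_mul] at hsum
  have hc := (convPowMeas_hasSum hμ h1 i).mul_left c
  rw [mul_one] at hc
  refine hasSum_le (fun g => ?_) hc hsum
  obtain ⟨s, hs, hgs⟩ := hAS g
  calc c * convPowMeas μ i g ≤ A.indicator p (g * s) := by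
        rw [Set.indicator_of_mem hgs]
        exact hstep s hs g
    _ ≤ ∑ s ∈ S, A.indicator p (g * s) := Finset.single_le_sum (f := fun s => A.indicator p (g * s))
        (fun _ _ => Set.indicator_nonneg (fun _ _ => hp _) _) hs

end walk

theorem statement16 {G : Type*} [Group G] [Group.FG G] [Infinite G]
    (hvsolv : ∃ H : Subgroup G, IsSolvable ↥H ∧ H.FiniteIndex)
    (μ : G → ℝ)
    (hpos : ∀ g, 0 ≤ μ g) (hsum : (∑' g : G, μ g) = 1)
    (hfin : {g | μ g ≠ 0}.Finite)
    (hnondeg : Subsemigroup.closure {g | μ g ≠ 0} = ⊤)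
    (hsymm : ∀ g, μ g⁻¹ = μ g) (hlazy : 0 < μ 1) :
    limsup (fun i : ℕ => measSet (convPowMeas μ i) {g | IsOfFinOrder g})
      atTop < 1 := by
  have h1 : HasSum μ 1 := by
    have hs : Summable μ := summable_of_hasFiniteSupport hfin
    exact hsum ▸ hs.hasSum
  obtain ⟨A, S, hA, hAS⟩ := exists_syndetic hvsolv
  obtain ⟨m, c, hc, hS⟩ := exists_uniform_step hpos h1 hnondeg hlazy S
  have hcard : 0 < (S.card : ℝ) := by
    obtain ⟨s, hs, -⟩ := hAS 1
    exact_mod_cast Finset.card_pos.2 ⟨s, hs⟩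
  have hbound : ∀ i ≥ m,
      measSet (convPowMeas μ i) {g | IsOfFinOrder g} ≤ 1 - c / S.card := by
    intro i hi
    obtain ⟨j, rfl⟩ := Nat.exists_eq_add_of_le' hi
    have hlow := le_measSet_of_syndetic hpos h1 hAS hS j
    have hdisj : Disjoint A {g | IsOfFinOrder g} :=
      Set.disjoint_left.2 fun a ha => hA a ha
    have hle := measSet_add_le_one (convPowMeas_nonneg hpos (j + m))
      (convPowMeas_hasSum hpos h1 (j + m)) hdisj
    rw [← div_le_iff₀' hcard] at hlow
    linarith
  -- the sequence is bounded below, so its real `limsup` is not a junk value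
  have hcob : IsCoboundedUnder (· ≤ ·) atTop
      (fun i : ℕ => measSet (convPowMeas μ i) {g | IsOfFinOrder g}) :=
    (isBoundedUnder_of ⟨0, fun i => tsum_nonneg fun _ =>
      convPowMeas_nonneg hpos i _⟩ : IsBoundedUnder (· ≥ ·) atTop _).isCoboundedUnder_le
  have hpos' : 0 < c / S.card := div_pos hc hcard
  have := limsup_le_of_le hcob (eventually_atTop.2 ⟨m, hbound⟩)
  linarith
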